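/- Let G : P_1(ℝ) → ℝ be of class C^1 and let m ∈ P_1(ℝ) be compactly supported. Then ∫_0^1 G(t·m + (1−t)δ_0) dt − ∫_0^1 δG(t·m + (1−t)δ_0, 0) dt = G(m). -/

import Mathlib

open MeasureTheory Filter Topology

noncomputable section

/-- `π` is a coupling of the measures `m` and `μ` on `ℝ`. -/
def IsCoupling (π : Measure (ℝ × ℝ)) (m μ : Measure ℝ) : Prop :=
  π.map Prod.fst = m ∧ π.map Prod.snd = μ

/-- The Wasserstein distance of order one between two measures on `ℝ`:
the infimum over couplings `π` of `∫ |x - y| dπ(x,y)`. -/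
def W1 (m μ : Measure ℝ) : ℝ :=
  sInf {c : ℝ | ∃ π : Measure (ℝ × ℝ), IsCoupling π m μ ∧ c = ∫ p, |p.1 - p.2| ∂π}

/-- Membership in `P₁(ℝ)`: Borel probability measures on `ℝ` with finite first moment. -/
def MemP1 (m : Measure ℝ) : Prop :=
  IsProbabilityMeasure m ∧ Integrable (fun x => |x|) m

/-- Membership in `P([-K,K])`: probability measures supported in `[-K,K]`. -/
def MemPK (K : ℝ) (m : Measure ℝ) : Prop :=
  IsProbabilityMeasure m ∧ m (Set.Icc (-K) K)ᶜ = 0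

/-- The convex combination `(1-t)·m₀ + t·m` of two measures. -/
def lineSeg (m₀ m : Measure ℝ) (t : ℝ) : Measure ℝ :=
  ENNReal.ofReal (1 - t) • m₀ + ENNReal.ofReal t • m

/-- The integral of `f` against the signed difference `m - μ`:
`∫ f d(m - μ) = ∫ f dm - ∫ f dμ`. -/
def dInt (f : ℝ → ℝ) (m μ : Measure ℝ) : ℝ := (∫ x, f x ∂m) - ∫ x, f x ∂μ

/-- `W₁`-(sequential) compactness of a subset of `P₁(ℝ)`. -/
def W1Compact (𝒦 : Set (Measure ℝ)) : Prop :=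
  (∀ m ∈ 𝒦, MemP1 m) ∧
  ∀ u : ℕ → Measure ℝ, (∀ n, u n ∈ 𝒦) →
    ∃ m ∈ 𝒦, ∃ φ : ℕ → ℕ, StrictMono φ ∧
      Tendsto (fun n => W1 (u (φ n)) m) atTop (𝓝 0)

/-- Sublinearity in the real variable, uniformly over `W₁`-compact sets of measures. -/
def SublinearOnCompacts (G : Measure ℝ → ℝ → ℝ) : Prop :=
  ∀ 𝒦 : Set (Measure ℝ), W1Compact 𝒦 →
    ∃ C > 0, ∀ m ∈ 𝒦, ∀ x : ℝ, |G m x| ≤ C * (1 + |x|)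

/-- `W₁`-continuity of a function of the measure variable at a point of `P₁(ℝ)`. -/
def W1ContinuousAt (g : Measure ℝ → ℝ) (m : Measure ℝ) : Prop :=
  ∀ ε > 0, ∃ η > 0, ∀ μ, MemP1 μ → W1 μ m < η → |g μ - g m| < ε

/-- Joint continuity of `G : P₁(ℝ) × ℝ → ℝ`. -/
def JointlyContinuous (G : Measure ℝ → ℝ → ℝ) : Prop :=
  ∀ m x, MemP1 m → ∀ ε > 0, ∃ η > 0, ∀ μ y, MemP1 μ →
    W1 μ m < η → |y - x| < η → |G μ y - G m x| < ε

/-- Joint continuity of `G : P₁(ℝ) × ℝ × ℝ → ℝ`. -/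
def JointlyContinuous2 (G : Measure ℝ → ℝ → ℝ → ℝ) : Prop :=
  ∀ m x y, MemP1 m → ∀ ε > 0, ∃ η > 0, ∀ μ x' y', MemP1 μ →
    W1 μ m < η → |x' - x| < η → |y' - y| < η → |G μ x' y' - G m x y| < ε

/-- `H` is a version of the (linear functional) derivative of `F : P₁(ℝ) → ℝ`. -/
def IsDerivVersion (F : Measure ℝ → ℝ) (H : Measure ℝ → ℝ → ℝ) : Prop :=
  Measurable (Function.uncurry H) ∧
  SublinearOnCompacts H ∧
  ∀ m m₀, MemP1 m → MemP1 m₀ →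
    F m - F m₀ = ∫ t in (0:ℝ)..1, dInt (H (lineSeg m₀ m t)) m m₀

/-- `H` is the canonical derivative of `F : P₁(ℝ) → ℝ`: the version of the derivative
satisfying `∫ H(μ,x) dμ(x) = 0` for every `μ ∈ P₁(ℝ)`. -/
def IsCanonicalDeriv (F : Measure ℝ → ℝ) (H : Measure ℝ → ℝ → ℝ) : Prop :=
  IsDerivVersion F H ∧ ∀ μ, MemP1 μ → ∫ x, H μ x ∂μ = 0

/-- `G : P₁(ℝ) × ℝ → ℝ` is of class `C^{0,1}`. -/
def IsC01 (G : Measure ℝ → ℝ → ℝ) : Prop :=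
  (∀ m, MemP1 m → ContDiff ℝ 1 (G m)) ∧
  (∀ x : ℝ, ∀ m, MemP1 m → W1ContinuousAt (fun μ => G μ x) m) ∧
  SublinearOnCompacts G ∧
  JointlyContinuous (fun m x => deriv (G m) x)

/-- `F : P₁(ℝ) → ℝ` is of class `C¹` with canonical derivative `H`. -/
def IsC1 (F : Measure ℝ → ℝ) (H : Measure ℝ → ℝ → ℝ) : Prop :=
  IsCanonicalDeriv F H ∧ IsC01 H

/-- Joint continuity on `P([-K,K]) × [-K,K]`. -/
def JointlyContinuousOnK (K : ℝ) (G : Measure ℝ → ℝ → ℝ) : Prop :=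
  ∀ m x, MemPK K m → x ∈ Set.Icc (-K) K → ∀ ε > 0, ∃ η > 0,
    ∀ μ y, MemPK K μ → y ∈ Set.Icc (-K) K → W1 μ m < η → |y - x| < η →
      |G μ y - G m x| < ε

/-- Joint continuity on `P([-K,K]) × [-K,K]²`. -/
def JointlyContinuousOnK2 (K : ℝ) (G : Measure ℝ → ℝ → ℝ → ℝ) : Prop :=
  ∀ m x y, MemPK K m → x ∈ Set.Icc (-K) K → y ∈ Set.Icc (-K) K → ∀ ε > 0, ∃ η > 0,
    ∀ μ x' y', MemPK K μ → x' ∈ Set.Icc (-K) K → y' ∈ Set.Icc (-K) K →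
      W1 μ m < η → |x' - x| < η → |y' - y| < η → |G μ x' y' - G m x y| < ε

end


lemma aux_W1_symm (m μ : Measure ℝ) : W1 m μ = W1 μ m := by
  have key : ∀ (m μ : Measure ℝ) (c : ℝ),
      (∃ π : Measure (ℝ × ℝ), IsCoupling π m μ ∧ c = ∫ p, |p.1 - p.2| ∂π) →
      (∃ π : Measure (ℝ × ℝ), IsCoupling π μ m ∧ c = ∫ p, |p.1 - p.2| ∂π) := by
    rintro m μ c ⟨π, ⟨h1, h2⟩, hc⟩
    refine ⟨π.map Prod.swap, ⟨?_, ?_⟩, ?_⟩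
    · rw [Measure.map_map measurable_fst measurable_swap]; exact h2
    · rw [Measure.map_map measurable_snd measurable_swap]; exact h1
    · rw [integral_map measurable_swap.aemeasurable (by fun_prop), hc]
      simp only [Prod.fst_swap, Prod.snd_swap, abs_sub_comm]
  unfold W1
  congr 1
  ext c
  exact ⟨key m μ c, key μ m c⟩

lemma aux_W1_nonneg (m μ : Measure ℝ) : 0 ≤ W1 m μ := by
  apply Real.sInf_nonneg
  rintro c ⟨π, -, rfl⟩
  exact integral_nonneg fun _ => abs_nonneg _

lemma aux_W1_le {m μ : Measure ℝ} (π : Measure (ℝ × ℝ)) (h : IsCoupling π m μ) :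
    W1 m μ ≤ ∫ p, |p.1 - p.2| ∂π := by
  apply csInf_le
  · refine ⟨0, ?_⟩
    rintro c ⟨π, -, rfl⟩
    exact integral_nonneg fun _ => abs_nonneg _
  · exact ⟨π, h, rfl⟩

lemma aux_W1_line_le {m : Measure ℝ} (hm : MemP1 m) {s t : ℝ} (hs : 0 ≤ s) (hst : s ≤ t)
    (ht : t ≤ 1) :
    W1 (lineSeg (Measure.dirac 0) m t) (lineSeg (Measure.dirac 0) m s)
      ≤ (t - s) * ∫ x, |x| ∂m := by
  have := hm.1
  set π : Measure (ℝ × ℝ) := ENNReal.ofReal (1 - t) • Measure.dirac ((0:ℝ), (0:ℝ))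
    + ENNReal.ofReal s • m.map (fun x => (x, x))
    + ENNReal.ofReal (t - s) • m.map (fun x => (x, (0:ℝ))) with hπ
  have hd : Measurable (fun x : ℝ => (x, x)) := by fun_prop
  have h0 : Measurable (fun x : ℝ => (x, (0:ℝ))) := by fun_prop
  have hc : IsCoupling π (lineSeg (Measure.dirac 0) m t) (lineSeg (Measure.dirac 0) m s) := by
    constructor
    · rw [hπ, Measure.map_add _ _ measurable_fst, Measure.map_add _ _ measurable_fst,
        Measure.map_smul, Measure.map_smul, Measure.map_smul, Measure.map_dirac' measurable_fst,
        Measure.map_map measurable_fst hd, Measure.map_map measurable_fst h0]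
      have e1 : (Prod.fst ∘ fun x : ℝ => (x, x)) = id := rfl
      have e2 : (Prod.fst ∘ fun x : ℝ => (x, (0:ℝ))) = id := rfl
      rw [e1, e2, Measure.map_id, add_assoc, ← add_smul,
        ← ENNReal.ofReal_add hs (by linarith)]
      simp [lineSeg]
    · rw [hπ, Measure.map_add _ _ measurable_snd, Measure.map_add _ _ measurable_snd,
        Measure.map_smul, Measure.map_smul, Measure.map_smul, Measure.map_dirac' measurable_snd,
        Measure.map_map measurable_snd hd, Measure.map_map measurable_snd h0]
      have e1 : (Prod.snd ∘ fun x : ℝ => (x, x)) = id := rfl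
      have e2 : (Prod.snd ∘ fun x : ℝ => (x, (0:ℝ))) = fun _ => 0 := rfl
      rw [e1, e2, Measure.map_id, Measure.map_const, measure_univ, one_smul, add_right_comm,
        ← add_smul, ← ENNReal.ofReal_add (by linarith) (by linarith)]
      simp [lineSeg]
  refine (aux_W1_le π hc).trans (le_of_eq ?_)
  have i1 : Integrable (fun p : ℝ × ℝ => |p.1 - p.2|)
      (ENNReal.ofReal (1 - t) • Measure.dirac ((0:ℝ), (0:ℝ))) := by
    apply Integrable.smul_measure _ ENNReal.ofReal_ne_top
    exact integrable_dirac (by simp)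
  have i2 : Integrable (fun p : ℝ × ℝ => |p.1 - p.2|)
      (ENNReal.ofReal s • m.map (fun x => (x, x))) := by
    apply Integrable.smul_measure _ ENNReal.ofReal_ne_top
    rw [integrable_map_measure (by fun_prop) hd.aemeasurable]
    simp [Function.comp_def]
  have i3 : Integrable (fun p : ℝ × ℝ => |p.1 - p.2|)
      (ENNReal.ofReal (t - s) • m.map (fun x => (x, (0:ℝ)))) := by
    apply Integrable.smul_measure _ ENNReal.ofReal_ne_top
    rw [integrable_map_measure (by fun_prop) h0.aemeasurable]
    simpa [Function.comp_def] using hm.2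
  rw [hπ, integral_add_measure (i1.add_measure i2) i3, integral_add_measure i1 i2,
    integral_smul_measure, integral_smul_measure, integral_smul_measure, integral_dirac,
    integral_map hd.aemeasurable (by fun_prop), integral_map h0.aemeasurable (by fun_prop)]
  simp [ENNReal.toReal_ofReal (sub_nonneg.2 hst)]

lemma aux_W1_line {m : Measure ℝ} (hm : MemP1 m) {s t : ℝ} (hs : s ∈ Set.Icc (0:ℝ) 1)
    (ht : t ∈ Set.Icc (0:ℝ) 1) :
    W1 (lineSeg (Measure.dirac 0) m t) (lineSeg (Measure.dirac 0) m s)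
      ≤ |t - s| * ∫ x, |x| ∂m := by
  rcases le_total s t with h | h
  · rw [abs_of_nonneg (sub_nonneg.2 h)]
    exact aux_W1_line_le hm hs.1 h ht.2
  · rw [abs_sub_comm, abs_of_nonneg (sub_nonneg.2 h), aux_W1_symm]
    exact aux_W1_line_le hm ht.1 h hs.2

lemma aux_dirac_mem : MemP1 (Measure.dirac 0) :=
  ⟨inferInstance, integrable_dirac (by simp)⟩

lemma aux_line_mem {m : Measure ℝ} (hm : MemP1 m) {t : ℝ} (ht : t ∈ Set.Icc (0:ℝ) 1) :
    MemP1 (lineSeg (Measure.dirac 0) m t) := by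
  have := hm.1
  refine ⟨⟨?_⟩, ?_⟩
  · simp only [lineSeg, Measure.coe_add, Measure.coe_smul, Pi.add_apply, Pi.smul_apply,
      measure_univ, smul_eq_mul, mul_one]
    rw [← ENNReal.ofReal_add (by linarith [ht.2]) ht.1]
    simp
  · exact (aux_dirac_mem.2.smul_measure ENNReal.ofReal_ne_top).add_measure
      (hm.2.smul_measure ENNReal.ofReal_ne_top)

lemma aux_compact {m : Measure ℝ} (hm : MemP1 m) :
    W1Compact (lineSeg (Measure.dirac 0) m '' Set.Icc (0:ℝ) 1) := by
  constructor
  · rintro _ ⟨t, ht, rfl⟩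
    exact aux_line_mem hm ht
  · intro u hu
    choose τ hτ hτu using hu
    obtain ⟨a, ha, φ, hφ, hlim⟩ := isCompact_Icc.tendsto_subseq hτ
    refine ⟨_, ⟨a, ha, rfl⟩, φ, hφ, ?_⟩
    have hz : Tendsto (fun n => |τ (φ n) - a| * ∫ x, |x| ∂m) atTop (𝓝 0) := by
      have := ((hlim.sub_const a).abs).mul_const (∫ x, |x| ∂m)
      simpa using this
    refine squeeze_zero (fun n => aux_W1_nonneg _ _) (fun n => ?_) hz
    rw [← hτu]
    exact aux_W1_line hm ha (hτ _)

lemma aux_continuousOn {m : Measure ℝ} (hm : MemP1 m) {f : Measure ℝ → ℝ}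
    (hf : ∀ μ, MemP1 μ → W1ContinuousAt f μ) :
    ContinuousOn (fun t => f (lineSeg (Measure.dirac 0) m t)) (Set.Icc 0 1) := by
  rw [Metric.continuousOn_iff]
  intro s hs ε hε
  obtain ⟨η, hη, H⟩ := hf _ (aux_line_mem hm hs) ε hε
  have hM : 0 ≤ ∫ x, |x| ∂m := integral_nonneg fun _ => abs_nonneg _
  refine ⟨η / ((∫ x, |x| ∂m) + 1), by positivity, fun t ht hd => ?_⟩
  rw [Real.dist_eq] at hd ⊢
  apply H _ (aux_line_mem hm ht)
  refine (aux_W1_line hm hs ht).trans_lt ?_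
  rw [lt_div_iff₀ (by positivity)] at hd
  nlinarith [abs_nonneg (t - s)]

lemma aux_line_line (m : Measure ℝ) {s t : ℝ} (hs : s ∈ Set.Icc (0:ℝ) 1)
    (ht : t ∈ Set.Icc (0:ℝ) 1) :
    lineSeg (Measure.dirac 0) (lineSeg (Measure.dirac 0) m t) s
      = lineSeg (Measure.dirac 0) m (s * t) := by
  unfold lineSeg
  rw [smul_add, smul_smul, smul_smul, ← ENNReal.ofReal_mul hs.1, ← ENNReal.ofReal_mul hs.1,
    ← add_assoc, ← add_smul, ← ENNReal.ofReal_add (by linarith [hs.2])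
      (mul_nonneg hs.1 (by linarith [ht.2]))]
  congr 3
  ring

lemma aux_dInt {m : Measure ℝ} {t : ℝ} (ht : t ∈ Set.Icc (0:ℝ) 1) {f : ℝ → ℝ}
    (hf : Integrable f m) :
    dInt f (lineSeg (Measure.dirac 0) m t) (Measure.dirac 0)
      = t * dInt f m (Measure.dirac 0) := by
  unfold dInt lineSeg
  rw [integral_add_measure ((integrable_dirac (by simp)).smul_measure ENNReal.ofReal_ne_top)
    (hf.smul_measure ENNReal.ofReal_ne_top), integral_smul_measure, integral_smul_measure,
    integral_dirac, ENNReal.toReal_ofReal (by linarith [ht.2]), ENNReal.toReal_ofReal ht.1]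
  simp only [smul_eq_mul]
  ring

/-- key identity in the proof of the fundamental theorem: for
`G : P₁(ℝ) → ℝ` of class `C¹` and `m ∈ P₁(ℝ)` compactly supported,
`∫₀¹ G(t·m + (1-t)δ₀) dt - ∫₀¹ δG(t·m + (1-t)δ₀, 0) dt = G(m)`. -/
theorem stmt18 (G : Measure ℝ → ℝ) (δG : Measure ℝ → ℝ → ℝ) (hG : IsC1 G δG)
    (m : Measure ℝ) (hm : MemP1 m) (K : ℝ) (hK : 0 < K) (hsupp : MemPK K m) :
    (∫ t in (0:ℝ)..1, G (lineSeg (Measure.dirac 0) m t)) -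
      (∫ t in (0:ℝ)..1, δG (lineSeg (Measure.dirac 0) m t) 0) = G m := by
  obtain ⟨⟨⟨-, hsub, hF⟩, hcan⟩, hC1, hW, -, -⟩ := hG
  have := hm.1
  obtain ⟨C, hC, hbd⟩ := hsub _ (aux_compact hm)
  have hline1 : lineSeg (Measure.dirac 0) m 1 = m := by simp [lineSeg]
  have hline0 : lineSeg (Measure.dirac 0) m 0 = Measure.dirac 0 := by simp [lineSeg]
  set L : ℝ → Measure ℝ := lineSeg (Measure.dirac 0) m with hL
  have hmem : ∀ t ∈ Set.Icc (0:ℝ) 1, MemP1 (L t) := fun t ht => aux_line_mem hm ht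
  have hbd' : ∀ t ∈ Set.Icc (0:ℝ) 1, ∀ x, |δG (L t) x| ≤ C * (1 + |x|) :=
    fun t ht x => hbd _ ⟨t, ht, rfl⟩ x
  have hdom : Integrable (fun x : ℝ => C * (1 + |x|)) m :=
    ((integrable_const _).add hm.2).const_mul C
  have hint : ∀ t ∈ Set.Icc (0:ℝ) 1, Integrable (δG (L t)) m := fun t ht =>
    hdom.mono' (hC1 _ (hmem t ht)).continuous.aestronglyMeasurable
      (Eventually.of_forall fun x => hbd' t ht x)
  set h : ℝ → ℝ := fun t => dInt (δG (L t)) m (Measure.dirac 0) with hh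
  set k : ℝ → ℝ := fun t => δG (L t) 0 with hk
  set g : ℝ → ℝ := fun t => G (L t) with hg
  have hkc : ContinuousOn k (Set.Icc 0 1) := aux_continuousOn hm (hW 0)
  have hth : ∀ t ∈ Set.Icc (0:ℝ) 1, t * h t = - k t := by
    intro t ht
    rw [hh, ← aux_dInt ht (hint t ht), dInt, hcan _ (hmem t ht), integral_dirac]
    simp [hk]
  have hhc : ContinuousOn h (Set.Ioc 0 1) := by
    have : ContinuousOn (fun t => - k t / t) (Set.Ioc 0 1) :=
      (hkc.mono Set.Ioc_subset_Icc_self).neg.div continuousOn_id (fun x hx => hx.1.ne')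
    refine this.congr fun t ht => ?_
    change h t = - k t / t
    rw [← hth t ⟨ht.1.le, ht.2⟩, mul_div_cancel_left₀ _ ht.1.ne']
  have hhb : ∀ t ∈ Set.Icc (0:ℝ) 1, ‖h t‖ ≤ (∫ x, C * (1 + |x|) ∂m) + C := by
    intro t ht
    have e1 : |∫ x, δG (L t) x ∂m| ≤ ∫ x, C * (1 + |x|) ∂m := by
      rw [← Real.norm_eq_abs]
      exact norm_integral_le_of_norm_le hdom (Eventually.of_forall fun x => hbd' t ht x)
    have e2 := hbd' t ht 0
    simp only [abs_zero, add_zero, mul_one] at e2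
    simp only [hh, dInt, integral_dirac, Real.norm_eq_abs]
    exact (abs_sub _ _).trans (add_le_add e1 e2)
  have hhi : IntervalIntegrable h volume 0 1 := by
    rw [intervalIntegrable_iff_integrableOn_Ioc_of_le zero_le_one]
    refine Integrable.of_bound (hhc.aestronglyMeasurable measurableSet_Ioc)
      ((∫ x, C * (1 + |x|) ∂m) + C) ?_
    filter_upwards [ae_restrict_mem measurableSet_Ioc] with t ht
    exact hhb t ⟨ht.1.le, ht.2⟩
  have hgf : ∀ t ∈ Set.Icc (0:ℝ) 1, g t = g 0 + ∫ s in (0:ℝ)..t, h s := by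
    intro t ht
    have e := hF (L t) (Measure.dirac 0) (hmem t ht) aux_dirac_mem
    have e2 : (∫ s in (0:ℝ)..1, dInt (δG (lineSeg (Measure.dirac 0) (L t) s)) (L t)
        (Measure.dirac 0)) = ∫ s in (0:ℝ)..1, t * h (s * t) := by
      apply intervalIntegral.integral_congr
      intro s hs
      rw [Set.uIcc_of_le zero_le_one] at hs
      have hst : s * t ∈ Set.Icc (0:ℝ) 1 :=
        ⟨mul_nonneg hs.1 ht.1, mul_le_one₀ hs.2 ht.1 ht.2⟩
      simp only [hL, hh]
      rw [aux_line_line m hs ht, aux_dInt ht (hint _ hst)]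
    rw [e2, intervalIntegral.integral_const_mul, intervalIntegral.mul_integral_comp_mul_right,
      zero_mul, one_mul] at e
    simp only [hg, hline0]
    linarith
  have hgc : ContinuousOn g (Set.Icc 0 1) := by
    have := intervalIntegral.continuousOn_primitive_interval' hhi
      (a := 0) (by simp)
    rw [Set.uIcc_of_le zero_le_one] at this
    exact (continuousOn_const.add this).congr hgf
  have hder : ∀ t ∈ Set.Ioo (0:ℝ) 1, HasDerivAt (fun t => t * g t) (g t - k t) t := by
    intro t ht
    have htI : t ∈ Set.Icc (0:ℝ) 1 := ⟨ht.1.le, ht.2.le⟩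
    have hco : ContinuousOn h (Set.Ioo 0 1) := hhc.mono Set.Ioo_subset_Ioc_self
    have d1 : HasDerivAt (fun u => ∫ s in (0:ℝ)..u, h s) (h t) t := by
      apply intervalIntegral.integral_hasDerivAt_right
      · exact hhi.mono_set (by
          rw [Set.uIcc_of_le zero_le_one, Set.uIcc_of_le ht.1.le]
          exact Set.Icc_subset_Icc_right ht.2.le)
      · exact hco.stronglyMeasurableAtFilter isOpen_Ioo t ht
      · exact hco.continuousAt (Ioo_mem_nhds ht.1 ht.2)
    have d2 : HasDerivAt g (h t) t := by
      refine (d1.const_add (g 0)).congr_of_eventuallyEq ?_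
      filter_upwards [Icc_mem_nhds ht.1 ht.2] with u hu using hgf u hu
    have d3 := (hasDerivAt_id t).mul d2
    have e : g t - k t = 1 * g t + id t * h t := by
      rw [id, hth t htI]; ring
    rw [e]
    exact d3
  have hgi : IntervalIntegrable g volume 0 1 :=
    ContinuousOn.intervalIntegrable (by rwa [Set.uIcc_of_le zero_le_one])
  have hki : IntervalIntegrable k volume 0 1 :=
    ContinuousOn.intervalIntegrable (by rwa [Set.uIcc_of_le zero_le_one])
  have fin := intervalIntegral.integral_eq_sub_of_hasDerivAt_of_le zero_le_one
    (continuousOn_id.mul hgc) hder (hgi.sub hki)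
  rw [intervalIntegral.integral_sub hgi hki] at fin
  rw [fin]
  simp [hg, hline1]
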